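/- For every integer n ≥ 3, the cycle C_n has the smallest number of connected induced subgraphs among all connected graphs of order n with no cut vertex: if G is a connected graph on n vertices having no cut vertex, then N(G) ≥ N(C_n) = n² − n + 1. -/

import Mathlib

/-!
The lower bound is proved by induction on `n`, by deleting or contracting an edge `ab`.

* Deleting edges can only destroy connected sets, so `G` may be replaced by a minimal spanning
  subgraph without cut vertices.
* If contracting `ab` creates a cut vertex, then `{a, b}` separates `G`. Either side of the
  separation joins `a` to `b`, so deleting `ab` creates no cut vertex (`TwoConn.deleteEdges`).
  Hence in a minimal `G` every edge can be contracted.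
* The connected sets of `G / ab` correspond, by taking preimages, to connected sets of `G` that
  contain both or neither of `a` and `b`. Since `G - b` is connected, growing a set from `a` one
  vertex at a time gives `n - 1` connected sets containing `a` but not `b`, and symmetrically for
  `b`. So the count drops by at least `2 (n - 1)`, which is the difference between `n² - n + 1`
  and its value at `n - 1` (`TwoConn.card_bound`).

For the cycle, the lower bound applies, and conversely every connected set other than the whole
vertex set is an arc, determined by its first vertex and its length in `{1, …, n - 1}`.

Connectedness of induced subgraphs is handled through cuts (`PC`) rather than walks.
-/

/-- The number of connected induced subgraphs of `G`: the number of nonempty vertex subsets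
inducing a connected subgraph. -/
noncomputable def numCIS {V : Type*} (G : SimpleGraph V) : ℕ :=
  Nat.card {S : Set V | S.Nonempty ∧ (G.induce S).Connected}

/-- A vertex `v` of a graph `G` is a cut vertex if deleting it increases the number of
connected components. -/
def IsCutVertex {V : Type*} (G : SimpleGraph V) (v : V) : Prop :=
  Nat.card G.ConnectedComponent < Nat.card ((G.induce {u | u ≠ v}).ConnectedComponent)

/-- The cycle on `m` vertices. -/
def cycGraph (m : ℕ) : SimpleGraph (Fin m) :=
  SimpleGraph.fromRel (fun a b => b.val = (a.val + 1) % m)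

/-! ### Connectedness through cuts -/

/-- `G` induces a preconnected graph on `S`, expressed through cuts: a set meeting `S` and closed
under adjacency inside `S` contains `S`. The empty set satisfies this. -/
def PC {V : Type*} (G : SimpleGraph V) (S : Set V) : Prop :=
  ∀ A : Set V, (∃ u ∈ S, u ∈ A) → (∀ u ∈ S, u ∈ A → ∀ v ∈ S, G.Adj u v → v ∈ A) → S ⊆ A

theorem preconnected_iff_PC {V : Type*} (G : SimpleGraph V) (S : Set V) :
    (G.induce S).Preconnected ↔ PC G S := by
  constructor
  · rintro h A ⟨u, hu, huA⟩ hcl v hv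
    have := (SimpleGraph.reachable_iff_reflTransGen _ _).1 (h ⟨u, hu⟩ ⟨v, hv⟩)
    have key : ∀ w : S, Relation.ReflTransGen (G.induce S).Adj ⟨u, hu⟩ w → w.1 ∈ A := by
      intro w hw
      induction hw with
      | refl => exact huA
      | tail _ hadj ih => exact hcl _ (Subtype.prop _) ih _ (Subtype.prop _) hadj
    exact key _ this
  · rintro h ⟨u, hu⟩ ⟨v, hv⟩
    obtain ⟨_, hr⟩ := h {w | ∃ hw : w ∈ S, (G.induce S).Reachable ⟨u, hu⟩ ⟨w, hw⟩}
      ⟨u, hu, hu, SimpleGraph.Reachable.refl _⟩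
      (by
        rintro x hx ⟨_, hr⟩ y hy hxy
        refine ⟨hy, hr.trans (SimpleGraph.Adj.reachable ?_)⟩
        exact hxy) hv
    exact hr

theorem numCIS_eq {V : Type*} (G : SimpleGraph V) :
    numCIS G = {S : Set V | S.Nonempty ∧ PC G S}.ncard := by
  unfold numCIS
  rw [Nat.card_coe_set_eq]
  congr 1
  ext S
  simp only [Set.mem_ofPred_eq, SimpleGraph.connected_iff, preconnected_iff_PC]
  constructor
  · rintro ⟨h, h', _⟩; exact ⟨h, h'⟩
  · rintro ⟨h, h'⟩; exact ⟨h, h', h.to_subtype⟩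

theorem PC.mono {V : Type*} {G H : SimpleGraph V} (hGH : H ≤ G) {S : Set V} (h : PC H S) :
    PC G S :=
  fun A hA hcl => h A hA fun u hu huA v hv huv => hcl u hu huA v hv (hGH huv)

theorem numCIS_mono {V : Type*} [Finite V] {G H : SimpleGraph V} (hGH : H ≤ G) :
    numCIS H ≤ numCIS G := by
  rw [numCIS_eq, numCIS_eq]
  exact Set.ncard_le_ncard (fun S hS => ⟨hS.1, hS.2.mono hGH⟩) (Set.toFinite _)

/-! ### Deleting an edge -/

/-- The graph is preconnected and remains so after deleting any one vertex. Small graphs, such as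
those with at most two vertices, are not excluded, which lets the induction start at one vertex. -/
def TwoConn {V : Type*} (G : SimpleGraph V) : Prop :=
  PC G Set.univ ∧ ∀ v, PC G {v}ᶜ

/-- If a nonempty set `X` avoiding `a` and `b` has all its neighbours in `X ∪ {a, b}`, then `X`
provides a connection from `a` to `b`, so the edge `ab` is not needed to connect `S ⊇ X`. -/
theorem PC.deleteEdge {V : Type*} {G : SimpleGraph V} {a b : V} {X S : Set V}
    (hX : X.Nonempty) (haX : a ∉ X) (hbX : b ∉ X)
    (hN : ∀ u ∈ X, ∀ v, G.Adj u v → v ∈ X ∨ v = a ∨ v = b) (hab : a ≠ b)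
    (ha : PC G {a}ᶜ) (hb : PC G {b}ᶜ) (hS : PC G S) (hXS : X ⊆ S) :
    PC (G.deleteEdges {s(a, b)}) S := by
  intro B hB hcl
  have hcl' : ∀ u ∈ S, u ∈ B → ∀ v ∈ S, G.Adj u v → s(u, v) ≠ s(a, b) → v ∈ B := by
    intro u hu huB v hv huv hne
    refine hcl u hu huB v hv ?_
    rw [SimpleGraph.deleteEdges_adj]
    exact ⟨huv, by simpa using hne⟩
  -- A closed set containing one end `p` of the edge contains the other end `q`: otherwise
  -- `X ∩ B`, if nonempty, is separated from `q` in `G - p`, and `X`, if disjoint from `B`, is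
  -- separated from `p` in `G - q`.
  have key : ∀ p q : V, s(p, q) = s(a, b) → p ≠ q → p ∉ X → q ∉ X → PC G {p}ᶜ → PC G {q}ᶜ →
      (∀ u ∈ X, ∀ v, G.Adj u v → v ∈ X ∨ v = p ∨ v = q) →
      p ∈ S → q ∈ S → p ∈ B → q ∈ B := by
    intro p q hpq hne hpX hqX hp hq hN hpS hqS hpB
    by_contra hqB
    have hnee : ∀ u ∈ X, ∀ v, s(u, v) ≠ s(a, b) := by
      intro u hu v h
      rw [← hpq, Sym2.eq_iff] at h
      rcases h with ⟨rfl, _⟩ | ⟨rfl, _⟩ <;> contradiction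
    by_cases hZ : (X ∩ B).Nonempty
    · obtain ⟨z, hzX, hzB⟩ := hZ
      have := hp (X ∩ B) ⟨z, fun h => hpX (h ▸ hzX), hzX, hzB⟩ (by
        rintro u - ⟨huX, huB⟩ v hv huv
        rcases hN u huX v huv with h | h | h
        · exact ⟨h, hcl' u (hXS huX) huB v (hXS h) huv (hnee u huX v)⟩
        · exact absurd h hv
        · subst h
          exact absurd (hcl' u (hXS huX) huB v hqS huv (hnee u huX v)) hqB)
      exact hqX (this (a := q) (fun h => hne h.symm)).1
    · obtain ⟨z, hzX⟩ := hX
      have := hq X ⟨z, fun h => hqX (h ▸ hzX), hzX⟩ (by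
        rintro u - huX v hv huv
        rcases hN u huX v huv with h | h | h
        · exact h
        · subst h
          refine absurd ⟨u, huX, hcl' v hpS hpB u (hXS huX) huv.symm ?_⟩ hZ
          rw [Sym2.eq_swap]
          exact hnee u huX v
        · exact absurd h hv)
      exact hpX (this (a := p) hne)
  refine hS B hB fun u hu huB v hv huv => ?_
  by_cases h : s(u, v) = s(a, b)
  · rcases Sym2.eq_iff.1 h with ⟨rfl, rfl⟩ | ⟨rfl, rfl⟩
    · exact key u v rfl hab haX hbX ha hb hN hu hv huB
    · exact key u v h hab.symm hbX haX hb ha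
        (fun x hx y hxy => by have := hN x hx y hxy; tauto) hu hv huB
  · exact hcl' u hu huB v hv huv h

/-- If the ends of an edge separate the graph, the edge can be deleted. -/
theorem TwoConn.deleteEdges {V : Type*} {G : SimpleGraph V} (hG : TwoConn G) {a b : V}
    (hab : a ≠ b) (hsep : ¬ PC G {a, b}ᶜ) : TwoConn (G.deleteEdges {s(a, b)}) := by
  unfold PC at hsep
  push Not at hsep
  obtain ⟨A, ⟨u, hu, huA⟩, hcl, hnot⟩ := hsep
  obtain ⟨w, hw, hwA⟩ := Set.not_subset.1 hnot
  -- The two sides of the separation are `{a, b}ᶜ ∩ A` and `{a, b}ᶜ \ A`; a deleted vertex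
  -- misses one of them.
  have h1 : ∀ S, PC G S → {a, b}ᶜ ∩ A ⊆ S → PC (G.deleteEdges {s(a, b)}) S := by
    intro S hS hXS
    refine PC.deleteEdge (X := {a, b}ᶜ ∩ A) ⟨u, hu, huA⟩ (by simp) (by simp) ?_ hab (hG.2 a) (hG.2 b) hS hXS
    rintro x ⟨hx, hxA⟩ y hxy
    by_cases hy : y ∈ ({a, b} : Set V)
    · right; simpa using hy
    · exact Or.inl ⟨hy, hcl x hx hxA y hy hxy⟩
  have h2 : ∀ S, PC G S → {a, b}ᶜ \ A ⊆ S → PC (G.deleteEdges {s(a, b)}) S := by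
    intro S hS hXS
    refine PC.deleteEdge (X := {a, b}ᶜ \ A) ⟨w, hw, hwA⟩ (by simp) (by simp) ?_ hab (hG.2 a) (hG.2 b) hS hXS
    rintro x ⟨hx, hxA⟩ y hxy
    by_cases hy : y ∈ ({a, b} : Set V)
    · right; simpa using hy
    · exact Or.inl ⟨hy, fun hyA => hxA (hcl y hy hyA x hx hxy.symm)⟩
  refine ⟨h1 _ hG.1 (Set.subset_univ _), fun v => ?_⟩
  by_cases hv : v ∈ A
  · exact h2 _ (hG.2 v) fun x hx (h : x = v) => hx.2 (by rw [h]; exact hv)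
  · exact h1 _ (hG.2 v) fun x hx (h : x = v) => hv (by rw [← h]; exact hx.2)

/-! ### Contracting an edge -/

/-- The quotient graph of `G` along `f`, with loops removed. -/
def contract {V W : Type*} (G : SimpleGraph V) (f : V → W) : SimpleGraph W where
  Adj x y := x ≠ y ∧ ∃ u v, f u = x ∧ f v = y ∧ G.Adj u v
  symm := ⟨fun _ _ ⟨h, u, v, hu, hv, huv⟩ => ⟨h.symm, v, u, hv, hu, huv.symm⟩⟩
  loopless := ⟨fun _ h => h.1 rfl⟩

theorem contract_PC {V W : Type*} (G : SimpleGraph V) (f : V → W) (hf : f.Surjective)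
    (hfib : ∀ u v, f u = f v → u = v ∨ G.Adj u v) (T : Set W) :
    PC (contract G f) T ↔ PC G (f ⁻¹' T) := by
  constructor
  · rintro h A ⟨u, hu, huA⟩ hcl
    -- A set closed under adjacency is a union of fibres inside the preimage of `T`.
    have hsat : ∀ x ∈ f ⁻¹' T, x ∈ A → ∀ y, f x = f y → y ∈ A := by
      intro x hx hxA y hxy
      rcases hfib x y hxy with rfl | hadj
      · exact hxA
      · exact hcl x hx hxA y (by simpa [← hxy] using hx) hadj
    have := h (f '' A) ⟨f u, hu, u, huA, rfl⟩ (by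
      rintro _ hx ⟨x, hxA, rfl⟩ _ hy ⟨_, p, q, hp, rfl, hpq⟩
      refine ⟨q, hcl p ?_ (hsat x hx hxA p hp.symm) q hy hpq, rfl⟩
      simpa [hp] using hx)
    intro v hv
    obtain ⟨x, hxA, hx⟩ := this hv
    exact hsat x (by simpa [hx] using hv) hxA v hx
  · rintro h B ⟨x, hx, hxB⟩ hcl y hy
    obtain ⟨u, rfl⟩ := hf x
    obtain ⟨v, rfl⟩ := hf y
    refine h (f ⁻¹' B) ⟨u, hx, hxB⟩ ?_ hy
    intro p hp hpB q hq hpq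
    by_cases he : f p = f q
    · simpa [← he] using hpB
    · exact hcl (f p) hp hpB (f q) hq ⟨he, p, q, rfl, rfl, hpq⟩

/-! ### Counting connected sets -/

/-- Connected sets can be grown from a vertex `a` one vertex at a time. -/
theorem PC.exists_chain {V : Type*} [Finite V] {G : SimpleGraph V} {S : Set V} (hS : PC G S)
    {a : V} (ha : a ∈ S) (k : ℕ) (hk : k < S.ncard) :
    ∃ T ⊆ S, a ∈ T ∧ PC G T ∧ T.ncard = k + 1 := by
  induction k with
  | zero =>
    refine ⟨{a}, by simpa using ha, rfl, ?_, by simp⟩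
    rintro A ⟨u, hu, huA⟩ - v hv
    rw [Set.mem_singleton_iff] at hu hv
    rwa [hv, ← hu]
  | succ k ih =>
    obtain ⟨T, hTS, haT, hT, hcard⟩ := ih (by omega)
    have hex : ∃ u ∈ T, ∃ v ∈ S, G.Adj u v ∧ v ∉ T := by
      by_contra! hno
      have := hS T ⟨a, ha, haT⟩ fun u _ huT v hv huv => hno u huT v hv huv
      have := Set.ncard_le_ncard this (Set.toFinite _)
      omega
    obtain ⟨u, huT, v, hvS, huv, hvT⟩ := hex
    refine ⟨insert v T, Set.insert_subset hvS hTS, Or.inr haT, ?_, ?_⟩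
    · rintro A ⟨x, hx, hxA⟩ hcl
      have hTA : (∃ y ∈ T, y ∈ A) → T ⊆ A := fun hy =>
        hT A hy fun p hp hpA q hq => hcl p (Or.inr hp) hpA q (Or.inr hq)
      have hTA' : T ⊆ A := by
        rcases hx with rfl | hx
        · exact hTA ⟨u, huT, hcl x (Or.inl rfl) hxA u (Or.inr huT) huv.symm⟩
        · exact hTA ⟨x, hx, hxA⟩
      exact Set.insert_subset (hcl u (Or.inr huT) (hTA' huT) v (Or.inl rfl) huv) hTA'
    · rw [Set.ncard_insert_of_notMem hvT, hcard]

theorem PC.card_le {V : Type*} [Finite V] {G : SimpleGraph V} {S : Set V} (hS : PC G S)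
    {a : V} (ha : a ∈ S) :
    S.ncard ≤ {T : Set V | T ⊆ S ∧ a ∈ T ∧ PC G T}.ncard := by
  choose g h1 h2 h3 h4 using fun k : Fin S.ncard => hS.exists_chain ha k.1 k.2
  have hinj : Function.Injective g := by
    intro i j hij
    have := h4 i
    rw [hij, h4 j] at this
    exact Fin.ext (by omega)
  calc S.ncard = (Set.range g).ncard := by
        rw [← Set.image_univ, Set.ncard_image_of_injective _ hinj, Set.ncard_univ,
          Nat.card_fin]
    _ ≤ _ := Set.ncard_le_ncard (by rintro _ ⟨i, rfl⟩; exact ⟨h1 i, h2 i, h3 i⟩)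
        (Set.toFinite _)

/-- Counting connected sets of `G` according to whether they contain both or neither of `a`
and `b`, only `a`, or only `b`. -/
theorem contract_count {V W : Type*} [Finite V] {G : SimpleGraph V} (hG : TwoConn G)
    (f : V → W) (hf : f.Surjective) (hfib : ∀ u v, f u = f v → u = v ∨ G.Adj u v)
    {a b : V} (hab : a ≠ b) (hfab : f a = f b) :
    numCIS (contract G f) + 2 * (Nat.card V - 1) ≤ numCIS G := by
  rw [numCIS_eq, numCIS_eq]
  set P : Set (Set V) := (fun T => f ⁻¹' T) '' {T : Set W | T.Nonempty ∧ PC (contract G f) T}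
    with hP
  have hPc : P.ncard = {T : Set W | T.Nonempty ∧ PC (contract G f) T}.ncard :=
    Set.ncard_image_of_injective _ hf.preimage_injective
  set Q : Set (Set V) := {T | T ⊆ {b}ᶜ ∧ a ∈ T ∧ PC G T} with hQ
  set R : Set (Set V) := {T | T ⊆ {a}ᶜ ∧ b ∈ T ∧ PC G T} with hR
  have hcompl : ∀ v : V, ({v}ᶜ : Set V).ncard = Nat.card V - 1 := fun v => by
    rw [Set.ncard_compl, Set.ncard_singleton]
  have hQc : Nat.card V - 1 ≤ Q.ncard := by
    rw [← hcompl b]; exact (hG.2 b).card_le hab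
  have hRc : Nat.card V - 1 ≤ R.ncard := by
    rw [← hcompl a]; exact (hG.2 a).card_le hab.symm
  have hQR : Disjoint Q R := Set.disjoint_left.2 fun T hT hT' => hT.1 hT'.2.1 rfl
  have hPQR : Disjoint P (Q ∪ R) := by
    rw [Set.disjoint_left]
    rintro _ ⟨T, -, rfl⟩ (h | h)
    · exact h.1 (show f b ∈ T from hfab ▸ h.2.1) rfl
    · exact h.1 (show f a ∈ T from hfab ▸ h.2.1) rfl
  have hsub : P ∪ (Q ∪ R) ⊆ {S : Set V | S.Nonempty ∧ PC G S} := by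
    rintro _ (⟨T, hT, rfl⟩ | h | h)
    · exact ⟨hT.1.preimage hf, (contract_PC G f hf hfib T).1 hT.2⟩
    · exact ⟨⟨a, h.2.1⟩, h.2.2⟩
    · exact ⟨⟨b, h.2.1⟩, h.2.2⟩
  have := Set.ncard_le_ncard hsub (Set.toFinite _)
  rw [Set.ncard_union_eq hPQR (Set.toFinite _) (Set.toFinite _),
    Set.ncard_union_eq hQR (Set.toFinite _) (Set.toFinite _)] at this
  omega

theorem TwoConn.card_bound (m : ℕ) : ∀ {V : Type*} [Finite V] (G : SimpleGraph V),
    Nat.card V = m + 1 → TwoConn G → (m + 1) * m + 1 ≤ numCIS G := by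
  induction m with
  | zero =>
    intro V _ G hV hG
    rw [numCIS_eq]
    have : Nonempty V := (Nat.card_pos_iff.1 (by omega)).1
    have h : Set.univ ∈ {S : Set V | S.Nonempty ∧ PC G S} := ⟨Set.univ_nonempty, hG.1⟩
    have := (Set.ncard_pos (Set.toFinite _)).2 ⟨_, h⟩
    omega
  | succ m ih =>
    intro V _ G hV hG
    classical
    obtain ⟨H, hHG, hH⟩ :=
      Set.Finite.exists_le_minimal (Set.toFinite {H : SimpleGraph V | TwoConn H}) hG
    refine le_trans ?_ (numCIS_mono hHG)
    have hHc : TwoConn H := hH.1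
    have : Nontrivial V := Finite.one_lt_card_iff_nontrivial.1 (by omega)
    obtain ⟨a, b, hadj⟩ : ∃ a b, H.Adj a b := by
      obtain ⟨x, y, hxy⟩ := exists_pair_ne V
      by_contra! hno
      exact hxy.symm
        (hHc.1 {x} ⟨x, trivial, rfl⟩ (fun u _ _ v _ huv => absurd huv (hno u v)) (Set.mem_univ y))
    have hab := hadj.ne
    have hpc : PC H {a, b}ᶜ := by
      by_contra hsep
      have hle := hH.2 (hHc.deleteEdges hab hsep) (SimpleGraph.deleteEdges_le _)
      have := hle hadj
      simp [SimpleGraph.deleteEdges_adj] at this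
    let f : V → {x : V // x ≠ b} := fun x => if h : x = b then ⟨a, hab⟩ else ⟨x, h⟩
    have hfb : f b = ⟨a, hab⟩ := by simp [f]
    have hfn : ∀ x (h : x ≠ b), f x = ⟨x, h⟩ := fun x h => by simp [f, h]
    have hfab : f a = f b := by rw [hfb, hfn a hab]
    have hf : f.Surjective := fun x => ⟨x.1, hfn _ x.2⟩
    have hfib : ∀ u v, f u = f v → u = v ∨ H.Adj u v := by
      intro u v huv
      by_cases hu : u = b <;> by_cases hv : v = b
      · exact Or.inl (hu.trans hv.symm)
      · subst hu
        rw [hfb, hfn v hv, Subtype.mk.injEq] at huv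
        exact Or.inr (huv ▸ hadj.symm)
      · subst hv
        rw [hfb, hfn u hu, Subtype.mk.injEq] at huv
        exact Or.inr (huv ▸ hadj)
      · rw [hfn u hu, hfn v hv, Subtype.mk.injEq] at huv
        exact Or.inl huv
    have hT : TwoConn (contract H f) := by
      refine ⟨(contract_PC H f hf hfib _).2 (by simpa using hHc.1), fun x => ?_⟩
      rw [contract_PC H f hf hfib]
      by_cases hx : x.1 = a
      · have : f ⁻¹' {x}ᶜ = {a, b}ᶜ := by
          ext y
          by_cases hy : y = b
          · subst hy; simp [hfb, Subtype.ext_iff, hx]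
          · simp [hfn y hy, Subtype.ext_iff, hx, hy]
        rwa [this]
      · have : f ⁻¹' {x}ᶜ = {x.1}ᶜ := by
          ext y
          by_cases hy : y = b
          · subst hy; simp [hfb, Subtype.ext_iff, Ne.symm hx, x.2.symm]
          · simp [hfn y hy, Subtype.ext_iff]
        rw [this]
        exact hHc.2 _
    have hW : Nat.card {x : V // x ≠ b} = m + 1 := by
      have h := Set.ncard_compl ({b} : Set V)
      rw [Set.ncard_singleton, hV] at h
      exact h
    have h1 := ih (contract H f) hW hT
    have h2 := contract_count hHc f hf hfib hab hfab
    rw [hV] at h2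
    have : (m + 1 + 1) * (m + 1) = (m + 1) * m + 2 * (m + 1) := by ring
    simp only [Nat.add_sub_cancel] at h2
    omega

/-! ### The cycle -/

theorem cycGraph_adj (m : ℕ) (a b : Fin (m + 3)) :
    (cycGraph (m + 3)).Adj a b ↔ b = a + 1 ∨ a = b + 1 := by
  have h : ∀ x y : Fin (m + 3), y.val = (x.val + 1) % (m + 3) ↔ y = x + 1 := by
    intro x y
    rw [Fin.ext_iff, Fin.val_add]
    simp
  rw [cycGraph, SimpleGraph.fromRel_adj, h, h]
  refine ⟨fun h => h.2, fun h => ⟨?_, h⟩⟩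
  rintro rfl
  simp at h

section Cycle

open Fin.NatCast Fin.CommRing

theorem fin_exists_add (m : ℕ) (v u : Fin (m + 3)) :
    ∃ j : ℕ, j < m + 3 ∧ u = v + (j : Fin (m + 3)) :=
  ⟨(u - v).val, (u - v).isLt, by simp⟩

theorem fin_add_ne (m : ℕ) (v : Fin (m + 3)) (j : ℕ) (h0 : 0 < j) (hj : j < m + 3) :
    v + (j : Fin (m + 3)) ≠ v := by
  intro h
  have h' : (j : Fin (m + 3)) = 0 := by simpa using h
  have := congrArg Fin.val h'
  rw [Fin.val_natCast, Nat.mod_eq_of_lt hj] at this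
  simp at this
  omega

theorem cycGraph_twoConn (m : ℕ) : TwoConn (cycGraph (m + 3)) := by
  constructor
  · rintro A ⟨u, -, huA⟩ hcl v -
    obtain ⟨j, -, rfl⟩ := fin_exists_add m u v
    induction j with
    | zero => simpa using huA
    | succ j ih =>
      refine hcl _ trivial ih _ trivial ((cycGraph_adj m _ _).2 (Or.inl ?_))
      push_cast; ring
  · rintro v A ⟨u, hu, huA⟩ hcl w hw
    -- The vertices other than `v` form the path `v + 1, v + 2, …, v + (n - 1)`.
    have key : ∀ j : ℕ, j + 1 < m + 3 →
        (v + ((j + 1 : ℕ) : Fin (m + 3)) ∈ A ↔ v + ((0 + 1 : ℕ) : Fin (m + 3)) ∈ A) := by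
      intro j
      induction j with
      | zero => intro _; rfl
      | succ j ih =>
        intro hj
        rw [← ih (by omega)]
        have h1 := fin_add_ne m v (j + 1 + 1) (by omega) hj
        have h2 := fin_add_ne m v (j + 1) (by omega) (by omega)
        have e : v + ((j + 1 + 1 : ℕ) : Fin (m + 3)) = v + ((j + 1 : ℕ) : Fin (m + 3)) + 1 := by
          push_cast; ring
        exact ⟨fun h => hcl _ h1 h _ h2 ((cycGraph_adj m _ _).2 (Or.inr e)),
          fun h => hcl _ h2 h _ h1 ((cycGraph_adj m _ _).2 (Or.inl e))⟩
    have all : ∀ x ∈ ({v}ᶜ : Set (Fin (m + 3))),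
        (x ∈ A ↔ v + ((0 + 1 : ℕ) : Fin (m + 3)) ∈ A) := by
      intro x hx
      obtain ⟨j, hj, rfl⟩ := fin_exists_add m v x
      cases j with
      | zero => exact absurd (by simp) hx
      | succ j => exact key j hj
    exact (all w hw).2 ((all u hu).1 huA)

/-- The set of the `k` consecutive vertices `i, i + 1, …, i + k - 1` of the cycle. -/
def arc (m : ℕ) (i : Fin (m + 3)) (k : ℕ) : Set (Fin (m + 3)) :=
  {x | ∃ j < k, x = i + (j : Fin (m + 3))}

theorem eq_arc (m : ℕ) (S : Set (Fin (m + 3))) (hne : S.Nonempty)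
    (hS : PC (cycGraph (m + 3)) S) (hu : S ≠ Set.univ) :
    ∃ i, ∃ k < m + 2, S = arc m i (k + 1) := by
  classical
  -- The arc starts at a vertex `i` of `S` whose predecessor is outside `S`.
  obtain ⟨i, hi, hpred⟩ : ∃ i ∈ S, i - 1 ∉ S := by
    by_contra! hall
    apply hu
    ext v
    refine ⟨fun _ => trivial, fun _ => ?_⟩
    obtain ⟨u, huS⟩ := hne
    obtain ⟨j, -, rfl⟩ := fin_exists_add m v u
    induction j with
    | zero => simpa using huS
    | succ j ih =>
      refine ih ?_
      have := hall _ huS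
      convert this using 1
      push_cast; ring
  have hlast : i + ((m + 1 + 1 : ℕ) : Fin (m + 3)) ∉ S := by
    convert hpred using 1
    have : (((m + 3 : ℕ)) : Fin (m + 3)) = 0 := Fin.natCast_self _
    have h2 : ((m + 1 + 1 : ℕ) : Fin (m + 3)) = ((m + 3 : ℕ) : Fin (m + 3)) - 1 := by
      push_cast; ring
    rw [h2, this, zero_sub, sub_eq_add_neg]
  have hex : ∃ k : ℕ, i + ((k + 1 : ℕ) : Fin (m + 3)) ∉ S := ⟨m + 1, hlast⟩
  refine ⟨i, Nat.find hex, lt_of_le_of_lt (Nat.find_min' hex hlast) (by omega), ?_⟩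
  have hin : ∀ j < Nat.find hex + 1, i + (j : Fin (m + 3)) ∈ S := by
    intro j hj
    cases j with
    | zero => simpa using hi
    | succ j => exact not_not.1 (Nat.find_min hex (m := j) (by omega))
  apply Set.Subset.antisymm
  · refine hS _ ⟨i, hi, 0, by omega, by simp⟩ ?_
    rintro _ - ⟨j, hj, rfl⟩ v hv hadj
    rcases (cycGraph_adj m _ _).1 hadj with h | h
    · have e : v = i + ((j + 1 : ℕ) : Fin (m + 3)) := by rw [h]; push_cast; ring
      by_cases hj' : j = Nat.find hex
      · subst hj'
        rw [e] at hv
        exact absurd hv (Nat.find_spec hex)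
      · exact ⟨j + 1, by omega, e⟩
    · cases j with
      | zero =>
        have : v = i - 1 := by rw [eq_sub_iff_add_eq, ← h]; simp
        exact absurd (this ▸ hv) hpred
      | succ j =>
        refine ⟨j, by omega, ?_⟩
        have : v = i + ((j + 1 : ℕ) : Fin (m + 3)) - 1 := by rw [h]; ring
        rw [this]; push_cast; ring
  · rintro _ ⟨j, hj, rfl⟩
    exact hin j hj

theorem cycGraph_upper (m : ℕ) : numCIS (cycGraph (m + 3)) ≤ (m + 3) * (m + 2) + 1 := by
  rw [numCIS_eq]
  have hsub : {S : Set (Fin (m + 3)) | S.Nonempty ∧ PC (cycGraph (m + 3)) S} ⊆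
      insert Set.univ (Set.range fun p : Fin (m + 3) × Fin (m + 2) => arc m p.1 (p.2 + 1)) := by
    rintro S ⟨hne, hS⟩
    by_cases hu : S = Set.univ
    · exact Or.inl hu
    · obtain ⟨i, k, hk, rfl⟩ := eq_arc m S hne hS hu
      exact Or.inr ⟨(i, ⟨k, hk⟩), rfl⟩
  refine (Set.ncard_le_ncard hsub (Set.toFinite _)).trans ((Set.ncard_insert_le _ _).trans ?_)
  rw [← Set.image_univ]
  have := Set.ncard_image_le (f := fun p : Fin (m + 3) × Fin (m + 2) => arc m p.1 (p.2 + 1))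
    (Set.toFinite Set.univ)
  rw [Set.ncard_univ, Nat.card_prod, Nat.card_fin, Nat.card_fin] at this
  omega

end Cycle

/-! ### Graphs without cut vertices -/

theorem twoConn_of_not_isCutVertex {V : Type*} [Finite V] {G : SimpleGraph V}
    (hconn : G.Connected) (hcut : ∀ v, ¬ IsCutVertex G v) : TwoConn G := by
  constructor
  · rintro A ⟨u, -, huA⟩ hcl v -
    have := (SimpleGraph.reachable_iff_reflTransGen _ _).1 (hconn.preconnected u v)
    induction this with
    | refl => exact huA
    | tail _ hadj ih => exact hcl _ trivial ih _ trivial hadj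
  · intro v
    rw [← preconnected_iff_PC]
    have h := hcut v
    unfold IsCutVertex at h
    have := hconn.preconnected.subsingleton_connectedComponent
    have h1 : Nat.card G.ConnectedComponent ≤ 1 := Finite.card_le_one_iff_subsingleton.2 this
    have : Finite (G.induce {u | u ≠ v}).ConnectedComponent := Quot.finite _
    have h2 : Subsingleton (G.induce {u | u ≠ v}).ConnectedComponent :=
      Finite.card_le_one_iff_subsingleton.1 (by omega)
    intro x y
    exact SimpleGraph.ConnectedComponent.exact (h2.elim _ _)

/-- Among all connected graphs of order `n ≥ 3` having no cut vertex, the cycle `C_n`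
minimises the number of connected induced subgraphs. -/
theorem stmt_9 {V : Type*} [Fintype V] (n : ℕ) (hn : 3 ≤ n) (G : SimpleGraph V)
    (hcard : Fintype.card V = n) (hconn : G.Connected)
    (hcut : ∀ v, ¬ IsCutVertex G v) :
    n ^ 2 - n + 1 ≤ numCIS G ∧ numCIS (cycGraph n) = n ^ 2 - n + 1 := by
  obtain ⟨m, rfl⟩ := Nat.exists_eq_add_of_le' hn
  have e : (m + 3) ^ 2 - (m + 3) + 1 = (m + 2 + 1) * (m + 2) + 1 := by
    have : (m + 3) ^ 2 = (m + 2 + 1) * (m + 2) + (m + 3) := by ring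
    omega
  rw [e]
  exact ⟨TwoConn.card_bound (m + 2) G (by rw [Nat.card_eq_fintype_card, hcard])
      (twoConn_of_not_isCutVertex hconn hcut),
    le_antisymm (cycGraph_upper m)
      (TwoConn.card_bound (m + 2) _ (by simp) (cycGraph_twoConn m))⟩
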